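/- In ℝ⁵ with the standard Euclidean inner product, let S be the set of five vectors (-2/3,4/3,-2/3,1/2,-1/2), (-2/3,1/3,1/3,1/2,-1/2), (-2/3,-2/3,4/3,1/2,-1/2), (1/3,1/3,-2/3,-1/2,1/2), (1/3,-2/3,1/3,-1/2,1/2). Then the minimum of ‖x‖² over x in the convex hull of S equals 1/42, and it is attained at the point β₈ = (-2/21,1/21,1/21,-1/14,1/14). -/

import Mathlib

/-- A vector in `ℝ⁵` with the standard Euclidean inner product. -/
noncomputable def vec5 (a b c d e : ℝ) : EuclideanSpace ℝ (Fin 5) :=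
  (WithLp.equiv 2 (Fin 5 → ℝ)).symm ![a, b, c, d, e]

/-- Table (2.3) for `(GL(3)×GL(2), Sym²k³⊗k²)`: the minimum of `‖x‖²` over the
convex hull of the listed weight vectors equals `1/42`, attained at
`β₈ = ((-2/21) (1/21) (1/21) (-1/14) (1/14))`. -/
theorem minsq_of_convexHull_weights :
    let S : Set (EuclideanSpace ℝ (Fin 5)) :=
      {vec5 (-2/3) (4/3) (-2/3) (1/2) (-1/2),
       vec5 (-2/3) (1/3) (1/3) (1/2) (-1/2),
       vec5 (-2/3) (-2/3) (4/3) (1/2) (-1/2),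
       vec5 (1/3) (1/3) (-2/3) (-1/2) (1/2),
       vec5 (1/3) (-2/3) (1/3) (-1/2) (1/2)}
    let β : EuclideanSpace ℝ (Fin 5) := vec5 (-2/21) (1/21) (1/21) (-1/14) (1/14)
    β ∈ convexHull ℝ S ∧ ‖β‖ ^ 2 = 1/42 ∧
      ∀ x ∈ convexHull ℝ S, (1/42 : ℝ) ≤ ‖x‖ ^ 2 := by
  intro S β
  refine ⟨?_, ?_, ?_⟩
  · have hc := convex_convexHull ℝ S
    have h2 : vec5 (-2/3) (1/3) (1/3) (1/2) (-1/2) ∈ convexHull ℝ S :=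
      subset_convexHull ℝ S (by simp [S])
    have h4 : vec5 (1/3) (1/3) (-2/3) (-1/2) (1/2) ∈ convexHull ℝ S :=
      subset_convexHull ℝ S (by simp [S])
    have h5 : vec5 (1/3) (-2/3) (1/3) (-1/2) (1/2) ∈ convexHull ℝ S :=
      subset_convexHull ℝ S (by simp [S])
    have h45 := hc h4 h5 (a := 1/2) (b := 1/2) (by norm_num) (by norm_num) (by norm_num)
    have h := hc h2 h45 (a := 3/7) (b := 4/7) (by norm_num) (by norm_num) (by norm_num)
    convert h using 1
    ext i
    fin_cases i <;> simp [β, vec5] <;> norm_num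
  · rw [EuclideanSpace.norm_sq_eq]
    simp [β, vec5, Fin.sum_univ_five]
    norm_num
  · intro x hx
    have hsub : convexHull ℝ S ⊆ {y | (1/42 : ℝ) ≤ inner ℝ β y} := by
      apply convexHull_min
      · intro y hy
        simp only [S, Set.mem_insert_iff, Set.mem_singleton_iff] at hy
        rcases hy with rfl | rfl | rfl | rfl | rfl <;>
          simp [β, vec5, PiLp.inner_apply, Fin.sum_univ_five] <;> norm_num
      · exact convex_halfSpace_ge (innerₛₗ ℝ β).isLinear _
    have h := hsub hx
    simp only [Set.mem_setOf_eq, PiLp.inner_apply, Fin.sum_univ_five] at h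
    simp [β, vec5] at h
    rw [EuclideanSpace.norm_sq_eq]
    simp only [Fin.sum_univ_five, Real.norm_eq_abs, sq_abs]
    nlinarith [sq_nonneg (x 0 + 2/21), sq_nonneg (x 1 - 1/21), sq_nonneg (x 2 - 1/21),
      sq_nonneg (x 3 + 1/14), sq_nonneg (x 4 - 1/14)]
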